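/- Let g: (0,1] → (0,1] be defined by g(x) = 2ⁿ(x − 2⁻ⁿ) for x ∈ (2⁻ⁿ, 2⁻ⁿ⁺¹], n ∈ ℕ, and let X have the density f_X(x) = 2ⁿ·(1/log₂(n+1) − 1/log₂(n+2)) for x ∈ (2⁻ⁿ, 2⁻ⁿ⁺¹]. Then Y = g(X) is uniformly distributed on (0,1], the absolute information loss is infinite, L(X→Y) = H(X|Y) = ∞, and yet the relative information loss vanishes, l(X→Y) = 0. -/

import Mathlib

/-!
The variable `X` is a branch index `W`, with weights `entW n`, together with an independent uniform
variable `Y`: on `W = n` one has `X = branch n Y`, where `branch n` inverts the `n`-th affine branch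
of `g`. At the level of measures this is `density_apply`, a change of variables on each cell, and
`map_joint`, which disintegrates the law of `(Y, X)` as the uniform law followed by `branchKernel`.
Hence `Y` is uniform, and by uniqueness of regular conditional distributions the conditional law of
`X` given `Y = y` puts mass `entW n` at the distinct points `branch n y`.

The absolute loss is therefore the entropy of the weights. It diverges because its terms dominate
a constant times the increments of `log log n` (`log_log_step_le`, `tsum_negMulLog_entW`).

For the relative loss, the quantization at scale `1 / k` sends all branches with `n > log₂ k` to
zero, so that given `Y` at most `⌊log₂ k⌋ + 2` values remain and the conditional entropy is at most
the logarithm of this number (`mEnt_quantized_branch_le`). The entropy of the quantization itself is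
at least a positive multiple of `log k`, by the contribution of the half-interval `(1/2, 1]` alone
(`le_mEnt_quantized`). The quotient is of order `log log k / log k`.
-/

open MeasureTheory ProbabilityTheory Filter Real Set

/-- Component quantization `x ↦ ⌊kx⌋/k`. -/
noncomputable def qz (k : ℕ) (x : ℝ) : ℝ := ⌊(k : ℝ) * x⌋ / k

/-- Shannon entropy (in nats) of a measure, computed from its atoms. -/
noncomputable def mEnt {α : Type*} [MeasurableSpace α] (μ : Measure α) : ℝ :=
  ∑' a : α, Real.negMulLog (μ {a}).toReal

/-- Conditional Shannon entropy `H(Z | Y)`, via the regular conditional distribution. -/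
noncomputable def condEnt {Ω α β : Type*} [MeasurableSpace Ω] [MeasurableSpace α]
    [StandardBorelSpace α] [Nonempty α] [MeasurableSpace β]
    (P : Measure Ω) [IsFiniteMeasure P] (Z : Ω → α) (Y : Ω → β) : ℝ :=
  ∫ y, mEnt ((condDistrib Z Y P) y) ∂(P.map Y)


/-- Shannon entropy of a measure with values in `ℝ≥0∞` (so that infinite entropy is
meaningful). -/
noncomputable def mEntE {α : Type*} [MeasurableSpace α] (μ : Measure α) : ENNReal :=
  ∑' a : α, ENNReal.ofReal (Real.negMulLog (μ {a}).toReal)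



/-! ### The weights and the divergence of their entropy -/

/-- The weight `1 / log₂ (n + 2) - 1 / log₂ (n + 3)` of the `n`-th branch. Indexing starts at `0`,
so this is the probability that `X` lies in `(2⁻ⁿ⁻¹, 2⁻ⁿ]`. -/
noncomputable def entW (n : ℕ) : ℝ :=
  1 / Real.logb 2 ((n : ℝ) + 2) - 1 / Real.logb 2 ((n : ℝ) + 3)

lemma entW_eq (n : ℕ) : entW n =
    Real.log 2 * (1 / Real.log ((n : ℝ) + 2) - 1 / Real.log ((n : ℝ) + 3)) := by
  unfold entW Real.logb
  simp only [one_div_div]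
  ring

lemma log_step_pos (n : ℕ) : 0 < Real.log ((n : ℝ) + 3) - Real.log ((n : ℝ) + 2) := by
  have := Real.log_lt_log (x := (n : ℝ) + 2) (y := (n : ℝ) + 3) (by positivity) (by linarith)
  linarith

lemma log_step_le (n : ℕ) :
    Real.log ((n : ℝ) + 3) - Real.log ((n : ℝ) + 2) ≤ 1 / ((n : ℝ) + 2) := by
  rw [← Real.log_div (by positivity) (by positivity)]
  refine (Real.log_le_sub_one_of_pos (by positivity)).trans (le_of_eq ?_)
  field_simp
  ring

lemma log_add_two_pos (n : ℕ) : 0 < Real.log ((n : ℝ) + 2) :=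
  Real.log_pos (by have : (0 : ℝ) ≤ n := n.cast_nonneg; linarith)

lemma one_le_log_add_three (n : ℕ) : 1 ≤ Real.log ((n : ℝ) + 3) := by
  rw [Real.le_log_iff_exp_le (by positivity)]
  have h := Real.exp_one_lt_d9
  have : (0 : ℝ) ≤ n := n.cast_nonneg
  linarith

lemma entW_pos (n : ℕ) : 0 < entW n := by
  rw [entW_eq]
  have h1 := log_add_two_pos n
  have h2 := log_step_pos n
  have := one_div_lt_one_div_of_lt h1 (by linarith : Real.log ((n : ℝ) + 2) < Real.log ((n : ℝ) + 3))
  exact mul_pos (Real.log_pos (by norm_num)) (by linarith)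

lemma entW_le (n : ℕ) : entW n ≤ 1 / ((n : ℝ) + 2) := by
  rw [entW_eq]
  have h1 := log_add_two_pos n
  have h3 := one_le_log_add_three n
  have h2 : Real.log 2 ≤ Real.log ((n : ℝ) + 2) :=
    Real.log_le_log (by norm_num) (by have : (0 : ℝ) ≤ n := n.cast_nonneg; linarith)
  have hs := log_step_pos n
  have e : Real.log 2 * (1 / Real.log ((n : ℝ) + 2) - 1 / Real.log ((n : ℝ) + 3)) =
      Real.log 2 / Real.log ((n : ℝ) + 2) *
      ((Real.log ((n : ℝ) + 3) - Real.log ((n : ℝ) + 2)) / Real.log ((n : ℝ) + 3)) := by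
    have : Real.log ((n : ℝ) + 3) ≠ 0 := by linarith
    field_simp
  rw [e]
  calc _ ≤ 1 * (Real.log ((n : ℝ) + 3) - Real.log ((n : ℝ) + 2)) := by
        apply mul_le_mul _ (div_le_self hs.le h3) (div_nonneg hs.le (by linarith)) zero_le_one
        rw [div_le_one h1]; exact h2
    _ ≤ _ := by rw [one_mul]; exact log_step_le n

/-- The entropy terms dominate the increments of `log log`, up to a constant. Since
`entW n ≤ 1 / (n + 2)`, the entropy term is at least `entW n * log (n + 2)`, which equals
`log 2 * (b - a) / b` for `a = log (n + 2)` and `b = log (n + 3)`. As `b ≤ 2 * a`, this is at least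
`(log 2 / 2) * (b / a - 1)`. -/
lemma log_log_step_le (n : ℕ) :
    Real.log 2 / 2 * (Real.log (Real.log (((n + 1 : ℕ) : ℝ) + 2)) - Real.log (Real.log ((n : ℝ) + 2)))
      ≤ Real.negMulLog (entW n) := by
  have hn : (0 : ℝ) ≤ n := n.cast_nonneg
  have hcast : (((n + 1 : ℕ) : ℝ) + 2) = (n : ℝ) + 3 := by push_cast; ring
  rw [hcast]
  have h1 := log_add_two_pos n
  have h3 := one_le_log_add_three n
  have hs := log_step_pos n
  have h2 : Real.log ((n : ℝ) + 3) ≤ 2 * Real.log ((n : ℝ) + 2) := by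
    rw [show (2 : ℝ) * Real.log ((n : ℝ) + 2) = Real.log (((n : ℝ) + 2) ^ 2) by
      rw [Real.log_pow]; norm_num]
    exact Real.log_le_log (by positivity) (by nlinarith)
  have hl2 : 0 < Real.log 2 := Real.log_pos (by norm_num)
  have hp : Real.log ((n : ℝ) + 2) ≤ - Real.log (entW n) := by
    have := Real.log_le_log (entW_pos n) (entW_le n)
    rw [one_div, Real.log_inv] at this
    linarith
  have key : Real.negMulLog (entW n) ≥ entW n * Real.log ((n : ℝ) + 2) := by
    unfold Real.negMulLog
    nlinarith [entW_pos n]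
  refine le_trans ?_ key
  rw [entW_eq]
  set a := Real.log ((n : ℝ) + 2)
  set b := Real.log ((n : ℝ) + 3)
  have hb : 0 < b := by linarith
  rw [← Real.log_div hb.ne' h1.ne']
  have hlog := Real.log_le_sub_one_of_pos (div_pos hb h1)
  have e : Real.log 2 * (1 / a - 1 / b) * a = Real.log 2 * ((b - a) / b) := by
    field_simp
  rw [e]
  have h4 : (b / a - 1) / 2 ≤ (b - a) / b := by
    rw [show (b / a - 1) / 2 = (b - a) / (2 * a) by field_simp]
    exact div_le_div_of_nonneg_left hs.le hb h2
  nlinarith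

/-- The weights have infinite entropy, because `log log N` is unbounded. -/
lemma tsum_negMulLog_entW : ∑' n, ENNReal.ofReal (Real.negMulLog (entW n)) = ⊤ := by
  by_contra h
  have hnn : ∀ n, 0 ≤ Real.negMulLog (entW n) := fun n => by
    refine Real.negMulLog_nonneg (entW_pos n).le ((entW_le n).trans ?_)
    rw [div_le_one (by positivity)]
    have : (0 : ℝ) ≤ n := n.cast_nonneg
    linarith
  have hsum : Summable fun n => Real.negMulLog (entW n) := by
    have := ENNReal.summable_toReal h
    simpa only [ENNReal.toReal_ofReal (hnn _)] using this
  have hb : ∀ N : ℕ, Real.log 2 / 2 * (Real.log (Real.log ((N : ℝ) + 2)) -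
      Real.log (Real.log (((0 : ℕ) : ℝ) + 2))) ≤ ∑' n, Real.negMulLog (entW n) := fun N => by
    refine le_trans ?_ (hsum.sum_le_tsum (Finset.range N) fun n _ => hnn n)
    rw [← Finset.sum_range_sub (fun n : ℕ => Real.log (Real.log ((n : ℝ) + 2))), Finset.mul_sum]
    exact Finset.sum_le_sum fun n _ => log_log_step_le n
  have ht : Tendsto (fun N : ℕ => Real.log 2 / 2 * (Real.log (Real.log ((N : ℝ) + 2)) -
      Real.log (Real.log (((0 : ℕ) : ℝ) + 2)))) atTop atTop := by
    refine Tendsto.const_mul_atTop (by have := Real.log_pos (one_lt_two : (1 : ℝ) < 2); positivity) ?_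
    refine tendsto_atTop_add_const_right _ _ ?_
    exact Real.tendsto_log_atTop.comp (Real.tendsto_log_atTop.comp
      (tendsto_atTop_add_const_right _ _ tendsto_natCast_atTop_atTop))
  obtain ⟨N, hN⟩ := (ht.eventually_gt_atTop (∑' n, Real.negMulLog (entW n))).exists
  exact absurd (hb N) (not_le.mpr hN)


/-! ### The branches of `g` and the law of `X` -/

/-- The inverse of the `n`-th branch of `g`, mapping `(0, 1]` onto `cell n`. -/
noncomputable def branch (n : ℕ) (y : ℝ) : ℝ := (1 / 2 : ℝ) ^ (n + 1) * (1 + y)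

/-- The interval `(2⁻ⁿ⁻¹, 2⁻ⁿ]` on which `g` is its `n`-th affine branch. -/
def cell (n : ℕ) : Set ℝ := Set.Ioc ((1 / 2 : ℝ) ^ (n + 1)) ((1 / 2 : ℝ) ^ n)

lemma measurable_branch (n : ℕ) : Measurable (branch n) := by
  unfold branch; fun_prop

lemma branch_mem_cell {n : ℕ} {y : ℝ} : branch n y ∈ cell n ↔ y ∈ Set.Ioc (0 : ℝ) 1 := by
  have h : (0 : ℝ) < (1 / 2) ^ (n + 1) := by positivity
  have e : (1 / 2 : ℝ) ^ n = (1 / 2) ^ (n + 1) * 2 := by rw [pow_succ]; ring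
  unfold branch cell
  rw [e, Set.mem_Ioc, Set.mem_Ioc, mul_le_mul_iff_right₀ h, lt_mul_iff_one_lt_right h]
  constructor <;> rintro ⟨_, _⟩ <;> constructor <;> linarith

lemma branch_injective {y : ℝ} (hy : 0 < y) : Function.Injective fun n => branch n y := by
  intro m n h
  have h' := mul_right_cancel₀ (by linarith : (1 + y) ≠ 0) h
  have := pow_right_injective₀ (by norm_num : (0 : ℝ) < 1 / 2) (by norm_num) h'
  simpa using this

lemma iUnion_cell : ⋃ n, cell n = Set.Ioc (0 : ℝ) 1 := by
  ext x
  simp only [Set.mem_iUnion]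
  constructor
  · rintro ⟨n, h1, h2⟩
    exact ⟨lt_trans (by positivity) h1, h2.trans (pow_le_one₀ (by norm_num) (by norm_num))⟩
  · rintro ⟨h1, h2⟩
    exact exists_nat_pow_near_of_lt_one h1 h2 (by norm_num) (by norm_num)

lemma disjoint_cell : Pairwise (Function.onFun Disjoint cell) := by
  have hanti : Antitone fun n : ℕ => (1 / 2 : ℝ) ^ n :=
    fun m n h => pow_le_pow_of_le_one (by norm_num) (by norm_num) h
  exact hanti.pairwise_disjoint_on_Ioc_succ

/-- The image of the uniform law under `branch n` has density `2 ^ (n + 1)` on `cell n`. -/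
lemma volume_cell_inter (n : ℕ) {s : Set ℝ} (hs : MeasurableSet s) :
    ENNReal.ofReal ((2 : ℝ) ^ (n + 1)) * volume (cell n ∩ s) =
      (volume.restrict (Set.Ioc (0 : ℝ) 1)) (branch n ⁻¹' s) := by
  rw [Measure.restrict_apply (measurable_branch n hs)]
  have e : branch n ⁻¹' s ∩ Set.Ioc (0 : ℝ) 1 =
      (fun y => 1 + y) ⁻¹' ((fun y => (1 / 2 : ℝ) ^ (n + 1) * y) ⁻¹' (cell n ∩ s)) := by
    ext y
    simp only [Set.mem_inter_iff, Set.mem_preimage]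
    rw [← branch_mem_cell (n := n), and_comm]
    rfl
  rw [e, measure_preimage_add, Real.volume_preimage_mul_left (by positivity)]
  congr 2
  rw [abs_of_pos (by positivity)]
  simp

/-- The law of `X` is the mixture, with weights `entW n`, of the images of the uniform law under
the branches. -/
lemma density_apply {f : ℝ → ℝ}
    (hf : ∀ n, ∀ x ∈ cell n, f x = (2 : ℝ) ^ (n + 1) * entW n)
    (hf0 : ∀ x, x ∉ Set.Ioc (0 : ℝ) 1 → f x = 0) {s : Set ℝ} (hs : MeasurableSet s) :
    (volume.withDensity (fun x => ENNReal.ofReal (f x))) s =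
      ∑' n, ENNReal.ofReal (entW n) *
        (volume.restrict (Set.Ioc (0 : ℝ) 1)) (branch n ⁻¹' s) := by
  have hcm : ∀ n, MeasurableSet (cell n) := fun n => measurableSet_Ioc
  rw [withDensity_apply _ hs]
  have h1 : ∫⁻ x in s, ENNReal.ofReal (f x) =
      ∫⁻ x in ⋃ n, cell n ∩ s, ENNReal.ofReal (f x) := by
    rw [← Set.iUnion_inter, iUnion_cell, ← lintegral_indicator hs,
      ← lintegral_indicator (measurableSet_Ioc.inter hs)]
    refine lintegral_congr fun x => ?_
    by_cases hx : x ∈ Set.Ioc (0 : ℝ) 1 <;> by_cases hxs : x ∈ s <;>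
      simp [Set.indicator, hxs, hx, hf0]
  rw [h1, lintegral_iUnion (fun n => (hcm n).inter hs)
    (fun i j hij => (disjoint_cell hij).mono Set.inter_subset_left Set.inter_subset_left)]
  refine tsum_congr fun n => ?_
  rw [← volume_cell_inter n hs, setLIntegral_congr_fun ((hcm n).inter hs)
    (g := fun _ => ENNReal.ofReal ((2 : ℝ) ^ (n + 1) * entW n)) (fun x hx => by
      simp only [hf n x hx.1]), setLIntegral_const, ENNReal.ofReal_mul (by positivity)]
  ring

/-- The conditional law of `X` given `Y = y`: mass `entW n` at `branch n y`, for each `n`. -/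
noncomputable def branchKernel : Kernel ℝ ℝ where
  toFun y := Measure.sum fun n => ENNReal.ofReal (entW n) • Measure.dirac (branch n y)
  measurable' := by
    refine Measure.measurable_of_measurable_coe _ fun s hs => ?_
    simp only [Measure.sum_apply _ hs, Measure.smul_apply, smul_eq_mul, Measure.dirac_apply' _ hs]
    refine Measurable.tsum fun n => Measurable.const_mul ?_ _
    exact (measurable_one.indicator hs).comp (measurable_branch n)

lemma branchKernel_apply (y : ℝ) {s : Set ℝ} (hs : MeasurableSet s) :
    branchKernel y s = ∑' n, ENNReal.ofReal (entW n) * s.indicator 1 (branch n y) := by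
  change (Measure.sum fun n => ENNReal.ofReal (entW n) • Measure.dirac (branch n y)) s = _
  simp only [Measure.sum_apply _ hs, Measure.smul_apply, smul_eq_mul, Measure.dirac_apply' _ hs]

lemma isMarkovKernel_branchKernel (h : ∑' n, ENNReal.ofReal (entW n) = 1) :
    IsMarkovKernel branchKernel :=
  ⟨fun y => ⟨by rw [branchKernel_apply y MeasurableSet.univ]; simpa using h⟩⟩

/-- The atoms `branch n y` are distinct, so the entropy is that of the weights. -/
lemma mEntE_branchKernel {y : ℝ} (hy : 0 < y) : mEntE (branchKernel y) = ⊤ := by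
  have hat : ∀ n, branchKernel y {branch n y} = ENNReal.ofReal (entW n) := fun n => by
    rw [branchKernel_apply y (measurableSet_singleton _), tsum_eq_single n]
    · simp
    · intro m hm
      have : branch m y ≠ branch n y := fun h => hm (branch_injective hy h)
      simp [this]
  refine top_unique ?_
  rw [← tsum_negMulLog_entW]
  refine le_trans (le_of_eq (tsum_congr fun n => ?_))
    (ENNReal.tsum_comp_le_tsum_of_injective (branch_injective hy) _)
  rw [hat, ENNReal.toReal_ofReal (entW_pos n).le]

/-- Disintegration of the mixture `μ`: under `μ`, the first coordinate of `(g x, x)` is uniform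
and the second has conditional law `branchKernel`. -/
lemma map_joint {μ : Measure ℝ} [IsProbabilityMeasure μ] [IsMarkovKernel branchKernel]
    (hμ : ∀ s, MeasurableSet s → μ s = ∑' n, ENNReal.ofReal (entW n) *
        (volume.restrict (Set.Ioc (0 : ℝ) 1)) (branch n ⁻¹' s))
    {g : ℝ → ℝ} (hgm : Measurable g)
    (hg : ∀ n, ∀ y ∈ Set.Ioc (0 : ℝ) 1, g (branch n y) = y) :
    μ.map (fun x => (g x, x)) = (volume.restrict (Set.Ioc (0 : ℝ) 1)) ⊗ₘ branchKernel := by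
  have hm : Measurable fun x => (g x, x) := hgm.prodMk measurable_id
  ext s hs
  rw [Measure.map_apply hm hs, hμ _ (hm hs), Measure.compProd_apply hs]
  simp_rw [branchKernel_apply _ (measurable_prodMk_left hs)]
  have hm2 : ∀ n, Measurable fun y => (y, branch n y) :=
    fun n => measurable_id.prodMk (measurable_branch n)
  have e : ∀ n y, (Prod.mk y ⁻¹' s).indicator (1 : ℝ → ENNReal) (branch n y) =
      ((fun y => (y, branch n y)) ⁻¹' s).indicator 1 y := fun n y => rfl
  simp_rw [e]
  rw [lintegral_tsum fun n => ((measurable_one.indicator (hm2 n hs)).const_mul _).aemeasurable]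
  refine tsum_congr fun n => ?_
  rw [lintegral_const_mul _ (measurable_one.indicator (hm2 n hs)),
    lintegral_indicator_one (hm2 n hs)]
  congr 1
  refine measure_congr ?_
  filter_upwards [ae_restrict_mem measurableSet_Ioc] with y hy
  apply propext
  change (g (branch n y), branch n y) ∈ s ↔ (y, branch n y) ∈ s
  rw [hg n y hy]

lemma cell_eq (n : ℕ) : cell n =
    Set.Ioc ((2 : ℝ) ^ (-((n + 1 : ℕ) : ℤ))) ((2 : ℝ) ^ (1 - ((n + 1 : ℕ) : ℤ))) := by
  have h : (1 : ℤ) - ((n + 1 : ℕ) : ℤ) = -(n : ℤ) := by push_cast; ring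
  rw [h, zpow_neg, zpow_neg, zpow_natCast, zpow_natCast]
  simp [cell]


/-! ### Entropy of finitely supported laws -/

lemma negMulLog_atom_nonneg {ν : Measure ℝ} [IsProbabilityMeasure ν] (a : ℝ) :
    0 ≤ Real.negMulLog (ν {a}).toReal :=
  Real.negMulLog_nonneg ENNReal.toReal_nonneg
    (ENNReal.toReal_le_of_le_ofReal zero_le_one (by simpa using prob_le_one))

lemma negMulLog_atom_eq_zero {ν : Measure ℝ} {S : Finset ℝ}
    (hS : ν (S : Set ℝ)ᶜ = 0) {a : ℝ} (ha : a ∉ S) :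
    Real.negMulLog (ν {a}).toReal = 0 := by
  have : ν {a} = 0 := measure_mono_null (by simpa using ha) hS
  simp [this]

lemma mEnt_eq_sum {ν : Measure ℝ} {S : Finset ℝ} (hS : ν (S : Set ℝ)ᶜ = 0) :
    mEnt ν = ∑ a ∈ S, Real.negMulLog (ν {a}).toReal :=
  tsum_eq_sum fun _ ha => negMulLog_atom_eq_zero hS ha

lemma mEnt_nonneg {ν : Measure ℝ} [IsProbabilityMeasure ν] : 0 ≤ mEnt ν :=
  tsum_nonneg negMulLog_atom_nonneg

lemma sum_le_mEnt {ν : Measure ℝ} [IsProbabilityMeasure ν] {S : Finset ℝ}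
    (hS : ν (S : Set ℝ)ᶜ = 0) (T : Finset ℝ) :
    ∑ a ∈ T, Real.negMulLog (ν {a}).toReal ≤ mEnt ν :=
  (summable_of_ne_finset_zero (s := S) fun _ ha => negMulLog_atom_eq_zero hS ha).sum_le_tsum T
    fun a _ => negMulLog_atom_nonneg a

/-- Summed over `N` atoms of total mass one, the correction `1 / N - x` cancels, which leaves the
bound `log N` on the entropy. -/
lemma negMulLog_le_gibbs {x N : ℝ} (hx : 0 ≤ x) (hN : 0 < N) :
    Real.negMulLog x ≤ x * Real.log N + (1 / N - x) := by
  rcases hx.eq_or_lt with rfl | hx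
  · simp [hN.le]
  · have h := Real.log_le_sub_one_of_pos (x := 1 / (N * x)) (by positivity)
    rw [one_div, Real.log_inv, Real.log_mul hN.ne' hx.ne'] at h
    have h2 := mul_le_mul_of_nonneg_left h hx.le
    have e : x * ((N * x)⁻¹ - 1) = 1 / N - x := by field_simp
    rw [e] at h2
    unfold Real.negMulLog
    linarith

lemma mEnt_le_log {ν : Measure ℝ} [IsProbabilityMeasure ν] {S : Finset ℝ}
    (hS : ν (S : Set ℝ)ᶜ = 0) {M : ℕ} (hM : S.card ≤ M) :
    mEnt ν ≤ Real.log M := by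
  have hsum : ∑ a ∈ S, (ν {a}).toReal = 1 := by
    rw [← ENNReal.toReal_sum (fun a _ => measure_ne_top _ _), sum_measure_singleton,
      (prob_compl_eq_zero_iff S.measurableSet).mp hS]
    simp
  have hne : S.Nonempty := by
    rw [Finset.nonempty_iff_ne_empty]; rintro rfl; simp at hsum
  have hc : (0 : ℝ) < S.card := by exact_mod_cast hne.card_pos
  rw [mEnt_eq_sum hS]
  calc _ ≤ ∑ a ∈ S, ((ν {a}).toReal * Real.log S.card + (1 / (S.card : ℝ) - (ν {a}).toReal)) :=
        Finset.sum_le_sum fun a _ => negMulLog_le_gibbs ENNReal.toReal_nonneg hc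
    _ = Real.log S.card := by
        rw [Finset.sum_add_distrib, ← Finset.sum_mul, Finset.sum_sub_distrib, hsum,
          Finset.sum_const, nsmul_eq_mul]
        field_simp
        ring
    _ ≤ Real.log M := Real.log_le_log hc (by exact_mod_cast hM)

/-! ### Quantization -/

lemma measurable_qz (k : ℕ) : Measurable (qz k) := by
  unfold qz
  exact (measurable_from_top.comp (Int.measurable_floor.comp (measurable_const_mul _))).div_const _

lemma qz_eq_natCast_div_iff {k : ℕ} (hk : 0 < k) (j : ℕ) (x : ℝ) :
    qz k x = (j : ℝ) / k ↔ x ∈ Set.Ico ((j : ℝ) / k) (((j : ℝ) + 1) / k) := by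
  have hk' : (0 : ℝ) < k := by exact_mod_cast hk
  unfold qz
  rw [div_left_inj' hk'.ne', Set.mem_Ico, div_le_iff₀ hk', lt_div_iff₀ hk', mul_comm x,
    show ((j : ℝ)) = ((j : ℤ) : ℝ) by simp, Int.cast_inj, Int.floor_eq_iff]

lemma qz_mem_image {k : ℕ} (hk : 0 < k) {x : ℝ} (hx : x ∈ Set.Ioc (0 : ℝ) 1) :
    qz k x ∈ (Finset.range (k + 1)).image fun j : ℕ => (j : ℝ) / k := by
  have hk' : (0 : ℝ) < k := by exact_mod_cast hk
  have h0 : 0 ≤ (k : ℝ) * x := mul_nonneg hk'.le hx.1.le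
  rw [Finset.mem_image]
  refine ⟨⌊(k : ℝ) * x⌋₊, ?_, ?_⟩
  · rw [Finset.mem_range, Nat.lt_succ_iff]
    exact Nat.floor_le_of_le (by nlinarith [hx.2])
  · unfold qz
    rw [natCast_floor_eq_intCast_floor h0]

/-- For `n > log₂ k` the cell `n` lies below `1 / k`, so it is quantized to zero. -/
lemma qz_branch_eq_zero {k n : ℕ} (hn : Nat.log 2 k < n) {y : ℝ} (hy : y ∈ Set.Ioc (0 : ℝ) 1) :
    qz k (branch n y) = 0 := by
  have hpos : 0 ≤ branch n y := mul_nonneg (by positivity) (by linarith [hy.1])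
  have hle : branch n y ≤ (1 / 2 : ℝ) ^ n := (branch_mem_cell.mpr hy).2
  have hk : (k : ℝ) < 2 ^ n := by
    exact_mod_cast Nat.lt_pow_of_log_lt one_lt_two hn
  have : ⌊(k : ℝ) * branch n y⌋ = 0 := by
    rw [Int.floor_eq_zero_iff]
    refine ⟨by positivity, ?_⟩
    calc (k : ℝ) * branch n y ≤ k * (1 / 2 : ℝ) ^ n := by gcongr
      _ < 2 ^ n * (1 / 2 : ℝ) ^ n := by gcongr
      _ = 1 := by rw [← mul_pow]; norm_num
  simp [qz, this]

/-- Given `Y = y`, the quantized variable takes at most `⌊log₂ k⌋ + 2` values: zero, and one for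
each branch `n ≤ log₂ k`. -/
lemma mEnt_quantized_branch_le [IsMarkovKernel branchKernel] (k : ℕ) {y : ℝ}
    (hy : y ∈ Set.Ioc (0 : ℝ) 1) :
    mEnt ((branchKernel y).map (qz k)) ≤ Real.log ((Nat.log 2 k + 2 : ℕ) : ℝ) := by
  have := Measure.isProbabilityMeasure_map (μ := branchKernel y) (measurable_qz k).aemeasurable
  let S : Finset ℝ := insert 0 ((Finset.range (Nat.log 2 k + 1)).image fun n => qz k (branch n y))
  have hmem : ∀ n, qz k (branch n y) ∈ S := fun n => by
    by_cases hn : Nat.log 2 k < n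
    · rw [qz_branch_eq_zero hn hy]; exact Finset.mem_insert_self _ _
    · exact Finset.mem_insert_of_mem (Finset.mem_image_of_mem _ (by simpa using! hn))
  refine mEnt_le_log (S := S) ?_ ?_
  · rw [Measure.map_apply (measurable_qz k) S.measurableSet.compl,
      branchKernel_apply _ (measurable_qz k S.measurableSet.compl)]
    simp [Set.indicator, hmem]
  · refine (Finset.card_insert_le _ _).trans ?_
    have := Finset.card_image_le (s := Finset.range (Nat.log 2 k + 1))
      (f := fun n => qz k (branch n y))
    rw [Finset.card_range] at this
    omega

/-- The entropy of the quantization grows at least like `log k`: for `k / 2 < j < k` the interval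
`[j / k, (j + 1) / k)` lies in `cell 0`, where the density is constant, so it has mass
`2 * entW 0 / k`. There are at least `k / 4` such `j`. -/
lemma le_mEnt_quantized {f : ℝ → ℝ}
    (hf : ∀ n, ∀ x ∈ cell n, f x = (2 : ℝ) ^ (n + 1) * entW n)
    (hf0 : ∀ x, x ∉ Set.Ioc (0 : ℝ) 1 → f x = 0)
    {μ : Measure ℝ} [IsProbabilityMeasure μ]
    (hμ : μ = volume.withDensity (fun x => ENNReal.ofReal (f x)))
    {k : ℕ} (hk : 4 ≤ k) :
    entW 0 / 2 * Real.log k ≤ mEnt (μ.map (qz k)) := by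
  have := Measure.isProbabilityMeasure_map (μ := μ) (measurable_qz k).aemeasurable
  have hk0 : 0 < k := by omega
  have hk' : (0 : ℝ) < k := by exact_mod_cast hk0
  have hp := entW_pos 0
  have hp1 : 2 * entW 0 ≤ 1 := by have := entW_le 0; norm_num at this; linarith
  have hS : (μ.map (qz k))
      (((Finset.range (k + 1)).image fun j : ℕ => (j : ℝ) / k : Finset ℝ) : Set ℝ)ᶜ = 0 := by
    have hm := (Finset.measurableSet
      ((Finset.range (k + 1)).image fun j : ℕ => (j : ℝ) / k)).compl
    rw [Measure.map_apply (measurable_qz k) hm, hμ, withDensity_apply _ (measurable_qz k hm),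
      setLIntegral_congr_fun (g := fun _ => 0) (measurable_qz k hm)]
    · simp
    · intro x hx
      have : x ∉ Set.Ioc (0 : ℝ) 1 := fun h => hx (qz_mem_image hk0 h)
      simp [hf0 x this]
  have hinj : Function.Injective fun j : ℕ => (j : ℝ) / k := fun i j h => by
    have := (div_left_inj' hk'.ne').mp h
    exact_mod_cast this
  have hatom : ∀ j ∈ Finset.Ico (k / 2 + 1) k,
      ((μ.map (qz k)) {(j : ℝ) / k}).toReal = 2 * entW 0 / k := fun j hj => by
    obtain ⟨h1, h2⟩ := Finset.mem_Ico.mp hj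
    have h1' : (k : ℝ) < 2 * j := by exact_mod_cast (by omega : k < 2 * j)
    have h2' : (j : ℝ) + 1 ≤ k := by exact_mod_cast h2
    have hpre : qz k ⁻¹' {(j : ℝ) / k} = Set.Ico ((j : ℝ) / k) (((j : ℝ) + 1) / k) := by
      ext x; exact qz_eq_natCast_div_iff hk0 j x
    have hsub : Set.Ico ((j : ℝ) / k) (((j : ℝ) + 1) / k) ⊆ cell 0 := by
      rintro x ⟨hx1, hx2⟩
      rw [div_le_iff₀ hk'] at hx1
      rw [lt_div_iff₀ hk'] at hx2
      constructor <;> norm_num <;> nlinarith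
    rw [Measure.map_apply (measurable_qz k) (measurableSet_singleton _), hpre, hμ,
      withDensity_apply _ measurableSet_Ico,
      setLIntegral_congr_fun (g := fun _ => ENNReal.ofReal (2 * entW 0)) measurableSet_Ico
        (fun x hx => by simp [hf 0 x (hsub hx)]),
      setLIntegral_const, Real.volume_Ico, ← ENNReal.ofReal_mul (by positivity),
      ENNReal.toReal_ofReal]
    · field_simp; ring
    · refine mul_nonneg (by positivity) ?_
      rw [← sub_div]; simp
  refine le_trans ?_ (sum_le_mEnt hS ((Finset.Ico (k / 2 + 1) k).image fun j : ℕ => (j : ℝ) / k))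
  rw [Finset.sum_image fun _ _ _ _ h => hinj h,
    Finset.sum_congr rfl fun j hj => by rw [hatom j hj],
    Finset.sum_const, Nat.card_Ico, nsmul_eq_mul]
  -- the number of available `j`; this is where `4 ≤ k` enters
  have hcard : (k : ℝ) / 4 ≤ ((k - (k / 2 + 1) : ℕ) : ℝ) := by
    rw [div_le_iff₀ (by norm_num)]
    exact_mod_cast (by omega : k ≤ (k - (k / 2 + 1)) * 4)
  have hent : 2 * entW 0 / k * Real.log k ≤ Real.negMulLog (2 * entW 0 / k) := by
    unfold Real.negMulLog
    rw [Real.log_div (by positivity) hk'.ne']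
    have : Real.log (2 * entW 0) ≤ 0 := Real.log_nonpos (by positivity) hp1
    have hq : 0 < 2 * entW 0 / k := by positivity
    nlinarith
  have hlogk : 0 ≤ Real.log k := Real.log_natCast_nonneg k
  calc entW 0 / 2 * Real.log k = k / 4 * (2 * entW 0 / k * Real.log k) := by field_simp; ring
    _ ≤ _ := mul_le_mul hcard hent (by positivity) (by positivity)

/-- The ratio of the upper bound on the conditional entropy to the lower bound on the entropy
behaves like `log log k / log k`. -/
lemma tendsto_log_log_div_log :
    Tendsto (fun k : ℕ => Real.log ((Nat.log 2 k + 2 : ℕ) : ℝ) / (entW 0 / 2 * Real.log k))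
      atTop (nhds 0) := by
  have hp := entW_pos 0
  have hlin : Tendsto (fun x : ℝ => (Real.log 4 + Real.log x) / x) atTop (nhds 0) := by
    have h1 : Tendsto (fun x : ℝ => Real.log 4 / x) atTop (nhds 0) :=
      tendsto_const_nhds.div_atTop tendsto_id
    have h2 : Tendsto (fun x : ℝ => Real.log x / x) atTop (nhds 0) :=
      Real.isLittleO_log_id_atTop.tendsto_div_nhds_zero
    simpa [add_div] using h1.add h2
  have hcomp := ((hlin.comp (Real.tendsto_log_atTop.comp tendsto_natCast_atTop_atTop)).const_mul
    (2 / entW 0))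
  rw [mul_zero] at hcomp
  refine squeeze_zero' ?_ ?_ hcomp
  · exact Eventually.of_forall fun k =>
      div_nonneg (Real.log_natCast_nonneg _) (mul_nonneg (by positivity) (Real.log_natCast_nonneg k))
  · filter_upwards [eventually_ge_atTop 3] with k hk
    have hk3 : (3 : ℝ) ≤ k := by exact_mod_cast hk
    have hl1 : 1 ≤ Real.log k := by
      have h := one_le_log_add_three 0
      have h' := Real.log_le_log (by norm_num) hk3
      norm_num at h
      linarith
    -- the constant `2` comes from `1 / log 2 ≤ 2`
    have hfloor : (Nat.log 2 k : ℝ) ≤ 2 * Real.log k := by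
      have h1 : (2 : ℝ) ^ (Nat.log 2 k) ≤ k := by
        exact_mod_cast Nat.pow_log_le_self 2 (by omega)
      have h2 := Real.log_le_log (by positivity) h1
      rw [Real.log_pow] at h2
      have h3 := Real.log_two_gt_d9
      have h4 : (0 : ℝ) ≤ Nat.log 2 k := Nat.cast_nonneg _
      nlinarith
    have hM : Real.log ((Nat.log 2 k + 2 : ℕ) : ℝ) ≤ Real.log 4 + Real.log (Real.log k) := by
      rw [← Real.log_mul (by norm_num) (by linarith)]
      refine Real.log_le_log (by positivity) ?_
      push_cast
      linarith
    have e : 2 / entW 0 * ((Real.log 4 + Real.log (Real.log k)) / Real.log k) =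
        (Real.log 4 + Real.log (Real.log k)) / (entW 0 / 2 * Real.log k) := by
      have : Real.log k ≠ 0 := by linarith
      field_simp
    simp only [Function.comp_apply]
    rw [e]
    gcongr

/-- Let `g : (0,1] → (0,1]`, `g(x) = 2ⁿ(x − 2⁻ⁿ)` on `(2⁻ⁿ, 2⁻ⁿ⁺¹]`
(`n ∈ ℕ`, `n ≥ 1`), and let `X` have density `f(x) = 2ⁿ(1/log₂(n+1) − 1/log₂(n+2))` on
`(2⁻ⁿ, 2⁻ⁿ⁺¹]`.  Then `Y = g(X)` is uniformly distributed on `(0,1]`, the absolute information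
loss `L(X→Y) = H(X|Y) = ∫ H(X|Y=y) dP_Y(y)` is infinite, and yet the relative information loss
vanishes: `l(X→Y) = 0`. -/
theorem infinite_absolute_loss_zero_relative_loss
    {Ω : Type*} [MeasurableSpace Ω] (P : Measure Ω) [IsProbabilityMeasure P]
    (X : Ω → ℝ) (hX : Measurable X)
    (g : ℝ → ℝ) (hgm : Measurable g)
    (hg : ∀ n : ℕ, 0 < n → ∀ x ∈ Set.Ioc ((2 : ℝ) ^ (-(n : ℤ))) ((2 : ℝ) ^ (1 - (n : ℤ))),
      g x = (2 : ℝ) ^ n * (x - (2 : ℝ) ^ (-(n : ℤ))))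
    (f : ℝ → ℝ)
    (hf : ∀ n : ℕ, 0 < n → ∀ x ∈ Set.Ioc ((2 : ℝ) ^ (-(n : ℤ))) ((2 : ℝ) ^ (1 - (n : ℤ))),
      f x = (2 : ℝ) ^ n * (1 / Real.logb 2 ((n : ℝ) + 1) - 1 / Real.logb 2 ((n : ℝ) + 2)))
    (hf0 : ∀ x, x ∉ Set.Ioc (0 : ℝ) 1 → f x = 0)
    (hXdist : P.map X = volume.withDensity (fun x => ENNReal.ofReal (f x))) :
    P.map (fun ω => g (X ω)) = volume.restrict (Set.Ioc (0 : ℝ) 1) ∧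
    (∫⁻ y, mEntE ((condDistrib X (fun ω => g (X ω)) P) y)
        ∂(P.map (fun ω => g (X ω)))) = ⊤ ∧
    Tendsto (fun k : ℕ =>
        condEnt P (fun ω => qz k (X ω)) (fun ω => g (X ω)) /
          mEnt (P.map (fun ω => qz k (X ω)))) atTop (nhds 0) := by
  have hf' : ∀ n, ∀ x ∈ cell n, f x = (2 : ℝ) ^ (n + 1) * entW n := fun n x hx => by
    rw [hf (n + 1) n.succ_pos x (by rwa [← cell_eq n])]
    unfold entW
    push_cast
    ring_nf
  have hg' : ∀ n, ∀ y ∈ Set.Ioc (0 : ℝ) 1, g (branch n y) = y := fun n y hy => by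
    have hmem := branch_mem_cell (n := n).mpr hy
    rw [hg (n + 1) n.succ_pos _ (by rwa [← cell_eq n]), zpow_neg, zpow_natCast]
    unfold branch
    rw [one_div, inv_pow]
    field_simp
    ring
  have : IsProbabilityMeasure (P.map X) := Measure.isProbabilityMeasure_map hX.aemeasurable
  have hlaw : ∀ s, MeasurableSet s → P.map X s = ∑' n, ENNReal.ofReal (entW n) *
      (volume.restrict (Set.Ioc (0 : ℝ) 1)) (branch n ⁻¹' s) := fun s hs => by
    rw [hXdist, density_apply hf' hf0 hs]
  have htot : ∑' n, ENNReal.ofReal (entW n) = 1 := by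
    -- the total mass of `X` being one replaces the telescoping sum of the weights
    have h := hlaw Set.univ MeasurableSet.univ
    rw [measure_univ] at h
    simpa using h.symm
  have := isMarkovKernel_branchKernel htot
  have hjoint : P.map (fun ω => (g (X ω), X ω)) =
      (volume.restrict (Set.Ioc (0 : ℝ) 1)) ⊗ₘ branchKernel := by
    rw [← map_joint hlaw hgm hg', Measure.map_map (hgm.prodMk measurable_id') hX]
    rfl
  have hunif : P.map (fun ω => g (X ω)) = volume.restrict (Set.Ioc (0 : ℝ) 1) := by
    rw [← Measure.fst_compProd (volume.restrict (Set.Ioc (0 : ℝ) 1)) branchKernel, ← hjoint,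
      Measure.fst_map_prodMk hX]
  have hcond : condDistrib X (fun ω => g (X ω)) P
      =ᵐ[volume.restrict (Set.Ioc (0 : ℝ) 1)] branchKernel := by
    rw [← hunif]
    exact condDistrib_ae_eq_of_measure_eq_compProd _ hX.aemeasurable (by rw [hjoint, hunif])
  refine ⟨hunif, ?_, ?_⟩
  · rw [hunif]
    have : ∀ᵐ y ∂(volume.restrict (Set.Ioc (0 : ℝ) 1)),
        mEntE (condDistrib X (fun ω => g (X ω)) P y) = ⊤ := by
      filter_upwards [hcond, ae_restrict_mem measurableSet_Ioc] with y hy hy0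
      rw [hy, mEntE_branchKernel hy0.1]
    rw [lintegral_congr_ae this]
    simp
  · have hcond_le : ∀ k : ℕ, 0 ≤ condEnt P (fun ω => qz k (X ω)) (fun ω => g (X ω)) ∧
        condEnt P (fun ω => qz k (X ω)) (fun ω => g (X ω)) ≤
          Real.log ((Nat.log 2 k + 2 : ℕ) : ℝ) := fun k => by
      refine ⟨integral_nonneg fun y => mEnt_nonneg, ?_⟩
      have hq := condDistrib_comp (mβ := borel ℝ) (μ := P) (fun ω => g (X ω))
        hX.aemeasurable (measurable_qz k)
      rw [hunif] at hq
      have hle : ∀ᵐ y ∂(volume.restrict (Set.Ioc (0 : ℝ) 1)),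
          mEnt (condDistrib (fun ω => qz k (X ω)) (fun ω => g (X ω)) P y) ≤
            Real.log ((Nat.log 2 k + 2 : ℕ) : ℝ) := by
        filter_upwards [hcond, hq, ae_restrict_mem measurableSet_Ioc] with y hy hqy hy0
        change mEnt (condDistrib (qz k ∘ X) (fun ω => g (X ω)) P y) ≤ _
        rw [hqy, Kernel.map_apply _ (measurable_qz k), hy]
        exact mEnt_quantized_branch_le k hy0
      unfold condEnt
      rw [hunif]
      -- no integrability of the left integrand is needed: the junk value `0` obeys the bound too
      refine (integral_mono_of_nonneg (Eventually.of_forall fun y => mEnt_nonneg)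
        (integrable_const _) hle).trans ?_
      simp
    refine squeeze_zero' ?_ ?_ tendsto_log_log_div_log
    · refine Eventually.of_forall fun k => div_nonneg (hcond_le k).1 ?_
      have := Measure.isProbabilityMeasure_map (μ := P)
        ((measurable_qz k).comp hX).aemeasurable
      exact mEnt_nonneg (ν := P.map (qz k ∘ X))
    · filter_upwards [eventually_ge_atTop 4] with k hk
      have hden := le_mEnt_quantized hf' hf0 hXdist hk
      rw [Measure.map_map (measurable_qz k) hX] at hden
      have hk1 : (1 : ℝ) < k := by exact_mod_cast (by omega : 1 < k)
      exact div_le_div₀ (Real.log_natCast_nonneg _) (hcond_le k).2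
        (mul_pos (half_pos (entW_pos 0)) (Real.log_pos hk1)) hden
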